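/- For every φ ∈ X, ∫_{ℝ³} det(P, ∇φ) dx = 0, where P = (0,0,0,1) is the north pole of S³. Consequently, ∫_{ℝ³} det(φ − P, ∇φ) dx = ∫_{ℝ³} det(φ, ∇φ) dx = 2π² d(φ). -/

import Mathlib

/- Common setting: Skyrme maps φ : ℝ³ → S³ ⊂ ℝ⁴ with weak partial derivatives. -/

open MeasureTheory Real Filter
open scoped Topology ENNReal BigOperators

noncomputable section

abbrev R3 : Type := Fin 3 → ℝ
abbrev R4 : Type := Fin 4 → ℝ

/-- Euclidean dot product on ℝ⁴. -/
def dot (u v : R4) : ℝ := ∑ a, u a * v a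

/-- Squared Euclidean norm on ℝ⁴. -/
def nsq (u : R4) : ℝ := dot u u

/-- |u∧v|² = |u|²|v|² − ⟨u,v⟩². -/
def wedgeSq (u v : R4) : ℝ := nsq u * nsq v - (dot u v) ^ 2

/-- Gram determinant of three vectors of ℝ⁴. -/
def gram (u v w : R4) : ℝ :=
  Matrix.det !![dot u u, dot u v, dot u w; dot v u, dot v v, dot v w; dot w u, dot w v, dot w w]

/-- Determinant of the 4×4 matrix with columns a, b, c, d. -/
def det4 (a b c d : R4) : ℝ := Matrix.det (Matrix.of fun i j => ![a, b, c, d] j i)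

/-- Smooth compactly supported test functions on ℝ³. -/
def IsTestFun {E : Type*} [NormedAddCommGroup E] [NormedSpace ℝ E] (ψ : R3 → E) : Prop :=
  ContDiff ℝ (⊤ : ℕ∞) ψ ∧ HasCompactSupport ψ

/-- A weakly differentiable map φ : ℝ³ → S³ ⊂ ℝ⁴ together with its weak
partial derivatives `pderiv i = ∂ᵢφ`. -/
structure SkyrmeMap where
  toFun : R3 → R4
  pderiv : Fin 3 → R3 → R4
  meas : Measurable toFun
  pderiv_locInt : ∀ i, LocallyIntegrable (pderiv i) volume
  sphere : ∀ᵐ x : R3, nsq (toFun x) = 1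
  weak : ∀ (i : Fin 3) (a : Fin 4) (ψ : R3 → ℝ), IsTestFun ψ →
    ∫ x : R3, fderiv ℝ ψ x (Pi.single i 1) * toFun x a
      = - ∫ x : R3, ψ x * pderiv i x a

/-- |∇φ|² = Σᵢ |∂ᵢφ|². -/
def gradSq (φ : SkyrmeMap) (x : R3) : ℝ := ∑ i, nsq (φ.pderiv i x)

/-- |A(φ)|² = Σᵢⱼ |∂ᵢφ∧∂ⱼφ|². -/
def ASq (φ : SkyrmeMap) (x : R3) : ℝ := ∑ i, ∑ j, wedgeSq (φ.pderiv i x) (φ.pderiv j x)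

/-- The Skyrme energy density |∇φ|² + |A(φ)|². -/
def energyDensity (φ : SkyrmeMap) (x : R3) : ℝ := gradSq φ x + ASq φ x

/-- φ ∈ X : finite Skyrme energy. -/
def memX (φ : SkyrmeMap) : Prop := Integrable (energyDensity φ) volume

/-- The Skyrme energy ℰ(φ). -/
def energy (φ : SkyrmeMap) : ℝ := ∫ x, energyDensity φ x

/-- det(φ, ∇φ)(x). -/
def detDen (φ : SkyrmeMap) (x : R3) : ℝ :=
  det4 (φ.toFun x) (φ.pderiv 0 x) (φ.pderiv 1 x) (φ.pderiv 2 x)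

/-- The topological degree d(φ) = (1/(2π²)) ∫ det(φ,∇φ). -/
def degree (φ : SkyrmeMap) : ℝ := (1 / (2 * π ^ 2)) * ∫ x, detDen φ x

/-- I_k = inf of the energy over maps of degree k. -/
def Skyrme.I (k : ℤ) : ℝ :=
  sInf {E : ℝ | ∃ φ : SkyrmeMap, memX φ ∧ degree φ = (k : ℝ) ∧ energy φ = E}

/-- The north pole P = (0,0,0,1) of S³. -/
def northPole : R4 := ![0, 0, 0, 1]

/-- The Euclidean ball B(y,r) in ℝ³. -/
def eball (y : R3) (r : ℝ) : Set R3 := {x | ∑ i, (x i - y i) ^ 2 < r ^ 2}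

/-!
Expanding along the first column, `det(P, ∇φ)` is a combination of triple products
`∇u · (∇v × ∇w)` of the gradients of three components of `φ`. The field `F = ∇v × ∇w` is weakly
divergence free, is integrable because the gradients are square integrable, and is square
integrable because of the term `|A(φ)|²` of the energy. Testing `div F = 0` against
`χₙ u`, where `u` is bounded and is first mollified, gives `∫ χₙ F · ∇u = -∫ u F · ∇χₙ`. Since `u F`
is integrable and `|∇χₙ| = O(1/n)` for the cutoffs `χₙ`, letting `n → ∞` yields `∫ F · ∇u = 0`.

That `∇v × ∇w` is weakly divergence free is the same statement for the fields `∇w × ∇ψ` with `ψ` a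
test function, whose divergence vanishes because `div (∇ψ × ∇η) = 0` for smooth `ψ` and `η`.
-/

open ContinuousLinearMap (lsmul)
open scoped Convolution ContDiff Matrix

section Mollification

variable {E : Type*} [NormedAddCommGroup E]

/-- Bump functions shrinking to the origin, with the ratio `rOut / rIn` fixed so that
mollifications converge almost everywhere. -/
def shrinkingBump (n : ℕ) : ContDiffBump (0 : E) where
  rIn := 1 / ((n : ℝ) + 1)
  rOut := 2 * (1 / ((n : ℝ) + 1))
  rIn_pos := by positivity
  rIn_lt_rOut := lt_two_mul_self (by positivity)

theorem tendsto_shrinkingBump_rOut :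
    Tendsto (fun n => (shrinkingBump n : ContDiffBump (0 : E)).rOut) atTop (𝓝 0) := by
  simpa [shrinkingBump] using (tendsto_one_div_add_atTop_nhds_zero_nat (𝕜 := ℝ)).const_mul 2

variable [NormedSpace ℝ E] [FiniteDimensional ℝ E] [MeasurableSpace E] [BorelSpace E]
  {μ : Measure E} [μ.IsAddHaarMeasure]

-- Translation acts continuously on `L²`, and `f ⋆ g` at `x` pairs `f` with a translate of `g (-·)`.
theorem continuous_convolution_of_memLp_two {f g : E → ℝ} (hf : MemLp f 2 μ) (hg : MemLp g 2 μ) :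
    Continuous (f ⋆[lsmul ℝ ℝ, μ] g) := by
  have : Fact ((2 : ℝ≥0∞) ≠ ⊤) := ⟨by norm_num⟩
  have hg' : MemLp (fun x => g (-x)) 2 μ :=
    hg.comp_measurePreserving (Measure.measurePreserving_neg μ)
  have hcont : Continuous fun x : E =>
      inner ℝ ((DomAddAct.mk (-x) : Eᵈᵃᵃ) +ᵥ hg'.toLp _) (hf.toLp f) :=
    ((DomAddAct.continuous_mk.comp continuous_neg).vadd continuous_const).inner continuous_const
  convert hcont using 2 with x
  have htrans : MemLp (fun t => g (x - t)) 2 μ :=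
    hg.comp_measurePreserving (Measure.measurePreserving_sub_left μ x)
  have hvadd : (DomAddAct.mk (-x) : Eᵈᵃᵃ) +ᵥ hg'.toLp _ = htrans.toLp _ := by
    rw [DomAddAct.mk_vadd_toLp]
    congr with t
    simp [sub_eq_add_neg, add_comm]
  rw [convolution_lsmul, hvadd, L2.inner_def]
  refine integral_congr_ae ?_
  filter_upwards [hf.coeFn_toLp, htrans.coeFn_toLp] with t hft hgt
  simp [hft, hgt]

theorem convolutionExistsAt_of_memLp_two {f g : E → ℝ} (hf : MemLp f 2 μ) (hg : MemLp g 2 μ)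
    (x : E) : ConvolutionExistsAt f g x (lsmul ℝ ℝ) μ :=
  hf.integrable_mul (hg.comp_measurePreserving (Measure.measurePreserving_sub_left μ x))

theorem integral_convolution_mul {ρ f g : E → ℝ} (hρ : Continuous ρ) (hρc : HasCompactSupport ρ)
    (hf : MemLp f 2 μ) (hg : MemLp g 2 μ) :
    ∫ x, (ρ ⋆[lsmul ℝ ℝ, μ] f) x * g x ∂μ =
      (ρ ⋆[lsmul ℝ ℝ, μ] (f ⋆[lsmul ℝ ℝ, μ] fun x => g (-x))) 0 := by
  have hg' : MemLp (fun x => g (-x)) 2 μ :=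
    hg.comp_measurePreserving (Measure.measurePreserving_neg μ)
  rw [← convolution_assoc (lsmul ℝ ℝ) (lsmul ℝ ℝ) (lsmul ℝ ℝ) (lsmul ℝ ℝ) mul_assoc
    hρ.aestronglyMeasurable hf.1 hg'.1, convolution_lsmul]
  · simp
  · exact .of_forall fun x => hρc.convolutionExists_left _ hρ (hf.locallyIntegrable one_le_two) x
  · exact .of_forall fun x => convolutionExistsAt_of_memLp_two hf.norm hg'.norm x
  · exact hρc.norm.convolutionExists_left _ hρ.norm
      (continuous_convolution_of_memLp_two hf.norm hg'.norm).locallyIntegrable 0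

/-- The mollification of `f` by the normalised bump function `B`. -/
def mollify (μ : Measure E) (B : ContDiffBump (0 : E)) (f : E → ℝ) : E → ℝ :=
  B.normed μ ⋆[lsmul ℝ ℝ, μ] f

variable {f g u : E → ℝ}

theorem contDiff_mollify (B : ContDiffBump (0 : E)) (hf : LocallyIntegrable f μ) :
    ContDiff ℝ ∞ (mollify μ B f) :=
  B.hasCompactSupport_normed.contDiff_convolution_left _ B.contDiff_normed hf

theorem abs_mollify_le (B : ContDiffBump (0 : E)) {C : ℝ} (hf : ∀ᵐ x ∂μ, |f x| ≤ C) (x : E) :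
    |mollify μ B f x| ≤ C := by
  have hB : Integrable (fun t => B.normed μ (x - t)) μ := B.integrable_normed.comp_sub_left x
  rw [mollify, convolution_lsmul_swap, ← Real.norm_eq_abs]
  calc ‖∫ t, B.normed μ (x - t) • f t ∂μ‖
      ≤ ∫ t, B.normed μ (x - t) * C ∂μ := by
        refine norm_integral_le_of_norm_le (hB.mul_const C) ?_
        filter_upwards [hf] with t ht
        rw [norm_smul, Real.norm_of_nonneg (B.nonneg_normed _)]
        exact mul_le_mul_of_nonneg_left ht (B.nonneg_normed _)
    _ = C := by
        rw [integral_mul_const, integral_sub_left_eq_self (B.normed μ) μ x, B.integral_normed,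
          one_mul]

theorem ae_tendsto_mollify (hf : LocallyIntegrable f μ) :
    ∀ᵐ x ∂μ, Tendsto (fun n => mollify μ (shrinkingBump n) f x) atTop (𝓝 (f x)) :=
  ContDiffBump.ae_convolution_tendsto_right_of_locallyIntegrable tendsto_shrinkingBump_rOut
    (.of_forall fun _ => le_rfl) hf

theorem tendsto_integral_mollify_mul (hf : MemLp f 2 μ) (hg : MemLp g 2 μ) :
    Tendsto (fun n => ∫ x, mollify μ (shrinkingBump n) f x * g x ∂μ) atTop
      (𝓝 (∫ x, f x * g x ∂μ)) := by
  have hg' : MemLp (fun x => g (-x)) 2 μ :=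
    hg.comp_measurePreserving (Measure.measurePreserving_neg μ)
  have hlim := ContDiffBump.convolution_tendsto_right_of_continuous (μ := μ)
    tendsto_shrinkingBump_rOut (continuous_convolution_of_memLp_two hf hg') 0
  simp_rw [mollify, integral_convolution_mul (ContDiffBump.continuous_normed _)
    (ContDiffBump.hasCompactSupport_normed _) hf hg]
  simpa [convolution_lsmul] using hlim

theorem tendsto_integral_mollify_mul_of_memLp_top (hu : MemLp u ⊤ μ) (hg : Integrable g μ) :
    Tendsto (fun n => ∫ x, mollify μ (shrinkingBump n) u x * g x ∂μ) atTop
      (𝓝 (∫ x, u x * g x ∂μ)) := by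
  have hloc : LocallyIntegrable u μ := hu.locallyIntegrable le_top
  refine tendsto_integral_of_dominated_convergence (fun x => lpNorm u ⊤ μ * ‖g x‖)
    (fun n => (contDiff_mollify _ hloc).continuous.aestronglyMeasurable.mul hg.1)
    (hg.norm.const_mul _) (fun n => .of_forall fun x => ?_) ?_
  · rw [norm_mul]
    gcongr
    exact abs_mollify_le _ (ae_le_lpNorm_exponent_top hu) x
  · filter_upwards [ae_tendsto_mollify hloc] with x hx
    exact hx.mul_const _

/-- `g` is the weak derivative of `u` in the direction `v`, tested against smooth functions with
compact support. -/
def HasWeakDeriv (μ : Measure E) (v : E) (u g : E → ℝ) : Prop :=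
  ∀ ψ : E → ℝ, ContDiff ℝ ∞ ψ → HasCompactSupport ψ →
    ∫ x, fderiv ℝ ψ x v * u x ∂μ = -∫ x, ψ x * g x ∂μ

theorem HasWeakDeriv.fderiv_mollify {v : E} (h : HasWeakDeriv μ v u g)
    (hu : LocallyIntegrable u μ) (B : ContDiffBump (0 : E)) (x : E) :
    fderiv ℝ (mollify μ B u) x v = mollify μ B g x := by
  have hB : ContDiff ℝ ∞ (B.normed μ) := B.contDiff_normed
  have hderiv := B.hasCompactSupport_normed.hasFDerivAt_convolution_left
    (lsmul ℝ ℝ) (hB.of_le (by exact_mod_cast le_top)) hu x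
  have hint := ((B.hasCompactSupport_normed.fderiv ℝ).convolutionExists_left
    ((lsmul ℝ ℝ).precompL E) (hB.continuous_fderiv (by simp)) hu x).integrable_swap
  have hfderiv (t : E) : fderiv ℝ (fun t => B.normed μ (x - t)) t v
      = -fderiv ℝ (B.normed μ) (x - t) v := by
    have hcomp := (hB.differentiable (by simp) (x - t)).hasFDerivAt.comp t
      ((hasFDerivAt_id t).const_sub x)
    rw [← Function.comp_def, hcomp.fderiv]
    simp
  have htest := h (fun t => B.normed μ (x - t)) (hB.comp (contDiff_const.sub contDiff_id))
    (B.hasCompactSupport_normed.comp_homeomorph (Homeomorph.subLeft x))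
  simp only [hfderiv, neg_mul, integral_neg, neg_inj] at htest
  rw [mollify, hderiv.fderiv, convolution_eq_swap, ContinuousLinearMap.integral_apply hint,
    mollify, convolution_lsmul_swap]
  simpa [ContinuousLinearMap.precompL_apply] using htest

end Mollification

section Cutoff

variable {E : Type*} [NormedAddCommGroup E] [NormedSpace ℝ E] [FiniteDimensional ℝ E]

/-- Smooth compactly supported functions `cutoff n x = B (x / (n + 1))`, where `B` is a bump
function equal to `1` on the unit ball; they exhaust the space with gradients of order `1 / n`. -/
def cutoff (n : ℕ) (x : E) : ℝ := (default : ContDiffBump (0 : E)) ((1 / ((n : ℝ) + 1)) • x)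

theorem contDiff_cutoff (n : ℕ) : ContDiff ℝ ∞ (cutoff n : E → ℝ) :=
  ContDiffBump.contDiff _ |>.comp (contDiff_const_smul _)

theorem hasCompactSupport_cutoff (n : ℕ) : HasCompactSupport (cutoff n : E → ℝ) :=
  (ContDiffBump.hasCompactSupport _).comp_smul (by positivity)

theorem abs_cutoff_le_one (n : ℕ) (x : E) : |cutoff n x| ≤ 1 := by
  rw [cutoff, abs_of_nonneg (ContDiffBump.nonneg _)]
  exact ContDiffBump.le_one _

theorem tendsto_cutoff (x : E) : Tendsto (fun n => cutoff n x) atTop (𝓝 1) := by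
  have hx : Tendsto (fun n : ℕ => (1 / ((n : ℝ) + 1)) • x) atTop (𝓝 0) := by
    simpa using (tendsto_one_div_add_atTop_nhds_zero_nat (𝕜 := ℝ)).smul_const x
  have hB := ((default : ContDiffBump (0 : E)).continuous.tendsto 0).comp hx
  rwa [ContDiffBump.one_of_mem_closedBall _ (Metric.mem_closedBall_self
    (ContDiffBump.rIn_pos _).le)] at hB

variable (E) in
theorem exists_norm_fderiv_cutoff_le :
    ∃ K, ∀ (n : ℕ) (x : E), ‖fderiv ℝ (cutoff n) x‖ ≤ 1 / ((n : ℝ) + 1) * K := by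
  have hB : ContDiff ℝ ∞ (default : ContDiffBump (0 : E)) := ContDiffBump.contDiff _
  obtain ⟨K, hK⟩ := (hB.continuous_fderiv (by simp)).bounded_above_of_compact_support
    ((ContDiffBump.hasCompactSupport _).fderiv ℝ)
  refine ⟨K, fun n x => ?_⟩
  unfold cutoff
  rw [fderiv_comp_smul, norm_smul, Real.norm_of_nonneg (by positivity)]
  gcongr
  exact hK _

variable [MeasurableSpace E] {μ : Measure E}

theorem tendsto_integral_fderiv_cutoff {F : E → E} (hF : Integrable F μ) :
    Tendsto (fun n => ∫ x, fderiv ℝ (cutoff n) x (F x) ∂μ) atTop (𝓝 0) := by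
  obtain ⟨K, hK⟩ := exists_norm_fderiv_cutoff_le E
  refine squeeze_zero_norm (a := fun n : ℕ => 1 / ((n : ℝ) + 1) * (K * ∫ x, ‖F x‖ ∂μ))
    (fun n => ?_) ?_
  · rw [← mul_assoc, ← integral_const_mul]
    exact norm_integral_le_of_norm_le (hF.norm.const_mul _)
      (.of_forall fun x => ContinuousLinearMap.le_of_opNorm_le _ (hK n x) _)
  · simpa using (tendsto_one_div_add_atTop_nhds_zero_nat (𝕜 := ℝ)).mul_const _

theorem tendsto_integral_cutoff_mul [BorelSpace E] {f : E → ℝ} (hf : Integrable f μ) :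
    Tendsto (fun n => ∫ x, cutoff n x * f x ∂μ) atTop (𝓝 (∫ x, f x ∂μ)) := by
  refine tendsto_integral_of_dominated_convergence (fun x => ‖f x‖)
    (fun n => (contDiff_cutoff n).continuous.aestronglyMeasurable.mul hf.1) hf.norm
    (fun n => .of_forall fun x => ?_) (.of_forall fun x => ?_)
  · rw [norm_mul]
    exact mul_le_of_le_one_left (norm_nonneg _) (abs_cutoff_le_one n x)
  · simpa using (tendsto_cutoff x).mul_const (f x)

end Cutoff

section Gradient

variable {ι : Type*}

theorem integrable_dotProduct_of_memLp_two [Fintype ι] {α : Type*} [MeasurableSpace α]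
    {μ : Measure α} {F G : α → ι → ℝ} (hF : MemLp F 2 μ) (hG : MemLp G 2 μ) :
    Integrable (fun x => F x ⬝ᵥ G x) μ :=
  integrable_finsetSum _ fun i _ => (hF.eval i).integrable_mul (hG.eval i)

variable [DecidableEq ι]

/-- The gradient of `ψ`, as the vector of its partial derivatives. -/
def grad (ψ : (ι → ℝ) → ℝ) (x : ι → ℝ) : ι → ℝ := fun i => fderiv ℝ ψ x (Pi.single i 1)

theorem hasCompactSupport_grad {ψ : (ι → ℝ) → ℝ} (hψ : HasCompactSupport ψ) :
    HasCompactSupport (grad ψ) :=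
  (hψ.fderiv ℝ).comp_left (g := fun (L : (ι → ℝ) →L[ℝ] ℝ) i => L (Pi.single i 1)) rfl

theorem grad_mul [Finite ι] {χ f : (ι → ℝ) → ℝ} {x : ι → ℝ} (hχ : DifferentiableAt ℝ χ x)
    (hf : DifferentiableAt ℝ f x) :
    grad (fun y => χ y * f y) x = χ x • grad f x + f x • grad χ x := by
  have := Fintype.ofFinite ι
  ext i
  simp [grad, fderiv_fun_mul hχ hf]

variable [Fintype ι]

theorem dotProduct_grad (ψ : (ι → ℝ) → ℝ) (x v : ι → ℝ) : v ⬝ᵥ grad ψ x = fderiv ℝ ψ x v := by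
  conv_rhs => rw [pi_eq_sum_univ' v, map_sum]
  simp [grad, dotProduct]

theorem contDiff_grad {ψ : (ι → ℝ) → ℝ} (hψ : ContDiff ℝ ∞ ψ) : ContDiff ℝ ∞ (grad ψ) :=
  contDiff_pi.2 fun _ => (hψ.fderiv_right (m := ∞) (by simp)).clm_apply contDiff_const

theorem memLp_grad {ψ : (ι → ℝ) → ℝ} (hψ : ContDiff ℝ ∞ ψ) (hψc : HasCompactSupport ψ)
    (p : ℝ≥0∞) : MemLp (grad ψ) p volume :=
  (contDiff_grad hψ).continuous.memLp_of_hasCompactSupport (hasCompactSupport_grad hψc)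

/-- The divergence of a vector field, as the trace of its partial derivatives. -/
def divergence (G : (ι → ℝ) → ι → ℝ) (x : ι → ℝ) : ℝ :=
  ∑ i, fderiv ℝ (fun y => G y i) x (Pi.single i 1)

/-- `D` is the weak gradient of `u`. -/
def HasWeakGrad (u : (ι → ℝ) → ℝ) (D : (ι → ℝ) → ι → ℝ) : Prop :=
  ∀ i, HasWeakDeriv volume (Pi.single i 1) u (fun x => D x i)

/-- `F` is divergence free in the sense of distributions. -/
def IsWeaklyDivFree (F : (ι → ℝ) → ι → ℝ) : Prop :=
  ∀ ψ : (ι → ℝ) → ℝ, ContDiff ℝ ∞ ψ → HasCompactSupport ψ → ∫ x, F x ⬝ᵥ grad ψ x = 0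

variable {u : (ι → ℝ) → ℝ} {D F G : (ι → ℝ) → ι → ℝ}

theorem HasWeakGrad.grad_mollify (h : HasWeakGrad u D) (hu : LocallyIntegrable u)
    (B : ContDiffBump (0 : ι → ℝ)) (x : ι → ℝ) :
    grad (mollify volume B u) x = fun i => mollify volume B (fun y => D y i) x :=
  funext fun i => (h i).fderiv_mollify hu B x

theorem fderiv_grad_comm {ψ : (ι → ℝ) → ℝ} (hψ : ContDiff ℝ ∞ ψ) (x : ι → ℝ) (i j : ι) :
    fderiv ℝ (fun y => grad ψ y i) x (Pi.single j 1) =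
      fderiv ℝ (fun y => grad ψ y j) x (Pi.single i 1) := by
  have hd : DifferentiableAt ℝ (fderiv ℝ ψ) x :=
    (hψ.fderiv_right (m := ∞) (by simp)).differentiable (by simp) x
  have hsymm := hψ.contDiffAt.isSymmSndFDerivAt (x := x) (by simpa using ENat.LEInfty.out)
  simpa [grad, fderiv_clm_apply hd] using hsymm (Pi.single j 1) (Pi.single i 1)

theorem HasWeakGrad.integral_dotProduct (h : HasWeakGrad u D) (hu : LocallyIntegrable u)
    (hD : LocallyIntegrable D) (hG : ContDiff ℝ ∞ G) (hGc : HasCompactSupport G) :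
    ∫ x, G x ⬝ᵥ D x = -∫ x, divergence G x * u x := by
  have hGi (i : ι) : ContDiff ℝ ∞ fun x => G x i := contDiff_pi.1 hG i
  have hGci (i : ι) : HasCompactSupport fun x => G x i :=
    hGc.comp_left (g := fun v : ι → ℝ => v i) rfl
  have hDi (i : ι) : LocallyIntegrable fun x => D x i := fun x =>
    let ⟨s, hs, hDs⟩ := hD x
    ⟨s, hs, Integrable.eval hDs i⟩
  have hdiv (i : ι) : Integrable fun x => fderiv ℝ (fun y => G y i) x (Pi.single i 1) * u x :=
    hu.integrable_smul_left_of_hasCompactSupport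
      (((hGi i).continuous_fderiv (by simp)).clm_apply continuous_const)
      ((hGci i).fderiv_apply (𝕜 := ℝ) _)
  have hGD (i : ι) : Integrable fun x => G x i * D x i :=
    (hDi i).integrable_smul_left_of_hasCompactSupport (hGi i).continuous (hGci i)
  simp_rw [dotProduct, divergence, Finset.sum_mul]
  rw [integral_finsetSum _ fun i _ => hdiv i, integral_finsetSum _ fun i _ => hGD i,
    ← Finset.sum_neg_distrib]
  exact Finset.sum_congr rfl fun i _ => by rw [h i _ (hGi i) (hGci i), neg_neg]

theorem HasWeakGrad.tendsto_integral_grad_mollify_dotProduct (h : HasWeakGrad u D)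
    (hu : LocallyIntegrable u) (hD : MemLp D 2) (hG : MemLp G 2) {χ : (ι → ℝ) → ℝ}
    (hχ : Continuous χ) (hχc : HasCompactSupport χ) :
    Tendsto (fun n => ∫ x, χ x * (G x ⬝ᵥ grad (mollify volume (shrinkingBump n) u) x)) atTop
      (𝓝 (∫ x, χ x * (G x ⬝ᵥ D x))) := by
  have hχG (i : ι) : MemLp (fun x => χ x * G x i) 2 :=
    (hG.eval i).mul' (hχ.memLp_of_hasCompactSupport hχc (p := ⊤))
  have hlim := tendsto_finsetSum Finset.univ fun i _ =>
    tendsto_integral_mollify_mul (hD.eval i) (hχG i)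
  have hmoll (n : ℕ) (i : ι) :
      Integrable fun x => mollify volume (shrinkingBump n) (fun y => D y i) x * (χ x * G x i) := by
    have hcont := (contDiff_mollify (shrinkingBump n)
      ((hD.eval i).locallyIntegrable one_le_two)).continuous
    have hχm := (hχ.mul hcont).memLp_of_hasCompactSupport (p := 2) (μ := volume) hχc.mul_right
    refine (hχm.integrable_mul (hG.eval i)).congr (.of_forall fun x => ?_)
    simp only [Pi.mul_apply]
    ring
  have hlimit (i : ι) : Integrable fun x => D x i * (χ x * G x i) :=
    (hD.eval i).integrable_mul (hχG i)
  convert hlim using 1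
  · ext n
    rw [← integral_finsetSum _ fun i _ => hmoll n i]
    refine integral_congr_ae (.of_forall fun x => ?_)
    simp only [h.grad_mollify hu, dotProduct, Finset.mul_sum]
    exact Finset.sum_congr rfl fun i _ => by ring
  · rw [← integral_finsetSum _ fun i _ => hlimit i]
    simp only [dotProduct, Finset.mul_sum]
    exact congrArg 𝓝 (integral_congr_ae (.of_forall fun x =>
      Finset.sum_congr rfl fun i _ => by ring))

theorem IsWeaklyDivFree.integral_mul_dotProduct_grad_add (hdiv : IsWeaklyDivFree F)
    (hF : MemLp F 2) {f χ : (ι → ℝ) → ℝ} (hf : ContDiff ℝ ∞ f) (hχ : ContDiff ℝ ∞ χ)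
    (hχc : HasCompactSupport χ) :
    (∫ x, χ x * (F x ⬝ᵥ grad f x)) + ∫ x, f x * (F x ⬝ᵥ grad χ x) = 0 := by
  have hχf : Integrable fun x => F x ⬝ᵥ (χ x • grad f x) :=
    integrable_dotProduct_of_memLp_two hF <|
      (hχ.continuous.smul (contDiff_grad hf).continuous).memLp_of_hasCompactSupport hχc.smul_right
  have hfχ : Integrable fun x => F x ⬝ᵥ (f x • grad χ x) :=
    integrable_dotProduct_of_memLp_two hF <|
      (hf.continuous.smul (contDiff_grad hχ).continuous).memLp_of_hasCompactSupport
        (hasCompactSupport_grad hχc).smul_left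
  rw [← hdiv _ (hχ.mul hf) hχc.mul_right]
  simp_rw [← smul_eq_mul, ← dotProduct_smul]
  rw [← integral_add hχf hfχ]
  refine integral_congr_ae (.of_forall fun x => ?_)
  simp only [smul_eq_mul, ← dotProduct_add]
  rw [grad_mul (hχ.differentiable (by simp) x) (hf.differentiable (by simp) x)]

theorem IsWeaklyDivFree.integral_mul_dotProduct_add (hdiv : IsWeaklyDivFree F) (hF : MemLp F 2)
    (hu : MemLp u ⊤) (hD : MemLp D 2) (h : HasWeakGrad u D) {χ : (ι → ℝ) → ℝ}
    (hχ : ContDiff ℝ ∞ χ) (hχc : HasCompactSupport χ) :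
    (∫ x, χ x * (F x ⬝ᵥ D x)) + ∫ x, u x * (F x ⬝ᵥ grad χ x) = 0 := by
  have hloc : LocallyIntegrable u := hu.locallyIntegrable le_top
  have hFχ : Integrable fun x => F x ⬝ᵥ grad χ x :=
    integrable_dotProduct_of_memLp_two hF (memLp_grad hχ hχc 2)
  refine tendsto_nhds_unique ((h.tendsto_integral_grad_mollify_dotProduct hloc hD hF
    hχ.continuous hχc).add (tendsto_integral_mollify_mul_of_memLp_top hu hFχ)) ?_
  simp_rw [hdiv.integral_mul_dotProduct_grad_add hF (contDiff_mollify _ hloc) hχ hχc]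
  exact tendsto_const_nhds

theorem IsWeaklyDivFree.integral_dotProduct_eq_zero (hdiv : IsWeaklyDivFree F)
    (hF₁ : Integrable F) (hF : MemLp F 2) (hu : MemLp u ⊤) (hD : MemLp D 2)
    (h : HasWeakGrad u D) : ∫ x, F x ⬝ᵥ D x = 0 := by
  have huF : Integrable (u • F) := hF₁.smul_of_top_right hu
  refine tendsto_nhds_unique (f := fun n => ∫ x, cutoff n x * (F x ⬝ᵥ D x)) (l := atTop)
    (tendsto_integral_cutoff_mul (integrable_dotProduct_of_memLp_two hF hD)) ?_
  have hcut (n : ℕ) : ∫ x, cutoff n x * (F x ⬝ᵥ D x) =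
      -∫ x, fderiv ℝ (cutoff n) x ((u • F) x) := by
    rw [eq_neg_iff_add_eq_zero, ← hdiv.integral_mul_dotProduct_add hF hu hD h (contDiff_cutoff n)
      (hasCompactSupport_cutoff n)]
    simp [dotProduct_grad]
  simpa only [hcut, neg_zero] using (tendsto_integral_fderiv_cutoff huF).neg

end Gradient

section CrossProduct

theorem memLp_cross {α : Type*} [MeasurableSpace α] {μ : Measure α} {p q r : ℝ≥0∞}
    [ENNReal.HolderTriple p q r] {F G : α → Fin 3 → ℝ} (hF : MemLp F p μ) (hG : MemLp G q μ) :
    MemLp (fun x => F x ⨯₃ G x) r μ := by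
  have hmul (i j : Fin 3) : MemLp (fun x => F x i * G x j) r μ := (hG.eval j).mul' (hF.eval i)
  simp only [cross_apply]
  rw [memLp_pi_iff]
  intro i
  fin_cases i <;> exact (hmul _ _).sub (hmul _ _)

theorem contDiff_cross {V : Type*} [NormedAddCommGroup V] [NormedSpace ℝ V] {n : WithTop ℕ∞}
    {F G : V → Fin 3 → ℝ} (hF : ContDiff ℝ n F) (hG : ContDiff ℝ n G) :
    ContDiff ℝ n fun x => F x ⨯₃ G x := by
  have hmul (i j : Fin 3) : ContDiff ℝ n fun x => F x i * G x j :=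
    (contDiff_pi.1 hF i).mul (contDiff_pi.1 hG j)
  simp only [cross_apply]
  rw [contDiff_pi]
  intro i
  fin_cases i <;> exact (hmul _ _).sub (hmul _ _)

theorem divergence_cross_grad {η ψ : R3 → ℝ} (hη : ContDiff ℝ ∞ η) (hψ : ContDiff ℝ ∞ ψ) (x : R3) :
    divergence (fun y => grad η y ⨯₃ grad ψ y) x = 0 := by
  have hη' (i : Fin 3) : DifferentiableAt ℝ (fun y => grad η y i) x :=
    (contDiff_pi.1 (contDiff_grad hη) i).differentiable (by simp) x
  have hψ' (i : Fin 3) : DifferentiableAt ℝ (fun y => grad ψ y i) x :=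
    (contDiff_pi.1 (contDiff_grad hψ) i).differentiable (by simp) x
  have hsub (i j k : Fin 3) :
      fderiv ℝ (fun y => grad η y i * grad ψ y j - grad η y j * grad ψ y i) x (Pi.single k 1) =
        grad η x i * fderiv ℝ (fun y => grad ψ y j) x (Pi.single k 1) +
        grad ψ x j * fderiv ℝ (fun y => grad η y i) x (Pi.single k 1) -
        (grad η x j * fderiv ℝ (fun y => grad ψ y i) x (Pi.single k 1) +
        grad ψ x i * fderiv ℝ (fun y => grad η y j) x (Pi.single k 1)) := by
    rw [fderiv_fun_sub ((hη' i).fun_mul (hψ' j)) ((hη' j).fun_mul (hψ' i)),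
      fderiv_fun_mul (hη' i) (hψ' j), fderiv_fun_mul (hη' j) (hψ' i)]
    simp
  simp only [divergence, Fin.sum_univ_three, cross_apply, Matrix.cons_val, hsub]
  rw [fderiv_grad_comm hη x 1 0, fderiv_grad_comm hη x 2 0, fderiv_grad_comm hη x 2 1,
    fderiv_grad_comm hψ x 1 0, fderiv_grad_comm hψ x 2 0, fderiv_grad_comm hψ x 2 1]
  ring

variable {u v w : R3 → ℝ} {D E G : R3 → R3}

theorem HasWeakGrad.isWeaklyDivFree_cross_grad (h : HasWeakGrad v E) (hv : LocallyIntegrable v)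
    (hE : LocallyIntegrable E) {ψ : R3 → ℝ} (hψ : ContDiff ℝ ∞ ψ) :
    IsWeaklyDivFree fun x => E x ⨯₃ grad ψ x := by
  intro η hη hηc
  have hperm (x : R3) : (E x ⨯₃ grad ψ x) ⬝ᵥ grad η x = (grad ψ x ⨯₃ grad η x) ⬝ᵥ E x := by
    rw [dotProduct_comm, triple_product_permutation, dotProduct_comm]
  have hc : HasCompactSupport fun x => grad ψ x ⨯₃ grad η x :=
    (hasCompactSupport_grad hηc).mono fun x hx hηx => hx (by simp only [hηx, map_zero])
  simp_rw [hperm]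
  rw [h.integral_dotProduct hv hE (contDiff_cross (contDiff_grad hψ) (contDiff_grad hη)) hc]
  simp [divergence_cross_grad hψ hη]

theorem HasWeakGrad.isWeaklyDivFree_cross (hu : MemLp u ⊤) (hv : LocallyIntegrable v)
    (hD : MemLp D 2) (hE : MemLp E 2) (huD : HasWeakGrad u D) (hvE : HasWeakGrad v E) :
    IsWeaklyDivFree fun x => D x ⨯₃ E x := by
  intro ψ hψ hψc
  have hdiv := hvE.isWeaklyDivFree_cross_grad hv (hE.locallyIntegrable one_le_two) hψ
  have hperm (x : R3) : (D x ⨯₃ E x) ⬝ᵥ grad ψ x = (E x ⨯₃ grad ψ x) ⬝ᵥ D x := by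
    rw [dotProduct_comm, triple_product_permutation, dotProduct_comm]
  simp_rw [hperm]
  exact hdiv.integral_dotProduct_eq_zero
    (memLp_one_iff_integrable.1 (memLp_cross hE (memLp_grad hψ hψc 2)))
    (memLp_cross hE (memLp_grad hψ hψc ⊤)) hu hD huD

theorem integral_triple_product_eq_zero (hu : MemLp u ⊤) (hv : MemLp v ⊤)
    (hw : LocallyIntegrable w) (hD : MemLp D 2) (hE : MemLp E 2) (hG : MemLp G 2)
    (huD : HasWeakGrad u D) (hvE : HasWeakGrad v E) (hwG : HasWeakGrad w G)
    (hEG : MemLp (fun x => E x ⨯₃ G x) 2) : ∫ x, D x ⬝ᵥ E x ⨯₃ G x = 0 := by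
  simp_rw [dotProduct_comm (D _)]
  exact (hvE.isWeaklyDivFree_cross hv hw hE hG hwG).integral_dotProduct_eq_zero
    (memLp_one_iff_integrable.1 (memLp_cross hE hG)) hEG hu hD huD

end CrossProduct

section Skyrme

theorem two_mul_wedgeSq (u v : R4) :
    2 * wedgeSq u v = ∑ a, ∑ b, (u a * v b - u b * v a) ^ 2 := by
  simp only [wedgeSq, nsq, dot, Fin.sum_univ_four]
  ring

theorem wedgeSq_nonneg (u v : R4) : 0 ≤ wedgeSq u v := by
  have h : 0 ≤ 2 * wedgeSq u v := by rw [two_mul_wedgeSq]; positivity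
  linarith

theorem sq_minor_le_two_mul_wedgeSq (u v : R4) (a b : Fin 4) :
    (u a * v b - u b * v a) ^ 2 ≤ 2 * wedgeSq u v := by
  rw [two_mul_wedgeSq]
  calc (u a * v b - u b * v a) ^ 2
      ≤ ∑ b, (u a * v b - u b * v a) ^ 2 :=
        Finset.single_le_sum (f := fun b => (u a * v b - u b * v a) ^ 2)
          (fun _ _ => sq_nonneg _) (Finset.mem_univ b)
    _ ≤ ∑ a, ∑ b, (u a * v b - u b * v a) ^ 2 :=
        Finset.single_le_sum (f := fun a => ∑ b, (u a * v b - u b * v a) ^ 2)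
          (fun _ _ => by positivity) (Finset.mem_univ a)

theorem nsq_nonneg (u : R4) : 0 ≤ nsq u :=
  show 0 ≤ ∑ a, u a * u a from Finset.sum_nonneg fun a _ => mul_self_nonneg (u a)

theorem sq_apply_le_nsq (u : R4) (a : Fin 4) : u a ^ 2 ≤ nsq u := by
  rw [sq]
  exact Finset.single_le_sum (f := fun a => u a * u a) (fun _ _ => mul_self_nonneg _)
    (Finset.mem_univ a)

theorem det4_sub_left (p q a b c : R4) : det4 (p - q) a b c = det4 p a b c - det4 q a b c := by
  simp [det4, Matrix.det_succ_column_zero, Fin.sum_univ_succ, sub_mul, mul_sub]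

theorem memLp_two_of_sq_le {α : Type*} [MeasurableSpace α] {μ : Measure α} {f g : α → ℝ}
    (hf : AEStronglyMeasurable f μ) (hg : Integrable g μ) (hfg : ∀ x, f x ^ 2 ≤ g x) :
    MemLp f 2 μ := by
  refine (memLp_two_iff_integrable_sq hf).2 (hg.mono' (hf.pow 2) (.of_forall fun x => ?_))
  simpa using hfg x

namespace SkyrmeMap

variable (φ : SkyrmeMap)

/-- The gradient `∇φₐ` of the component `φₐ` of a Skyrme map. -/
def componentGrad (a : Fin 4) (x : R3) : R3 := fun i => φ.pderiv i x a

theorem hasWeakGrad_componentGrad (a : Fin 4) :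
    HasWeakGrad (fun x => φ.toFun x a) (φ.componentGrad a) :=
  fun i ψ hψ hψc => φ.weak i a ψ ⟨hψ, hψc⟩

theorem det4_pderiv_eq_sum (p : R4) (x : R3) :
    det4 p (φ.pderiv 0 x) (φ.pderiv 1 x) (φ.pderiv 2 x) =
      ∑ k : Fin 4, (-1) ^ (k : ℕ) * (p k * (φ.componentGrad (k.succAbove 0) x ⬝ᵥ
        φ.componentGrad (k.succAbove 1) x ⨯₃ φ.componentGrad (k.succAbove 2) x)) := by
  rw [det4, Matrix.det_succ_column_zero]
  refine Finset.sum_congr rfl fun k _ => ?_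
  rw [triple_product_eq_det, mul_assoc]
  congr 4
  ext i j
  fin_cases i <;> fin_cases j <;> rfl

theorem memLp_top_toFun : MemLp φ.toFun ⊤ := by
  refine memLp_top_of_bound φ.meas.aestronglyMeasurable 1 ?_
  filter_upwards [φ.sphere] with x hx
  rw [pi_norm_le_iff_of_nonneg zero_le_one]
  intro a
  rw [Real.norm_eq_abs, ← sq_le_one_iff_abs_le_one, ← hx]
  exact sq_apply_le_nsq _ a

theorem aestronglyMeasurable_pderiv (i : Fin 3) (a : Fin 4) :
    AEStronglyMeasurable (fun x => φ.pderiv i x a) :=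
  (continuous_apply a).comp_aestronglyMeasurable (φ.pderiv_locInt i).aestronglyMeasurable

theorem gradSq_nonneg (x : R3) : 0 ≤ gradSq φ x := Finset.sum_nonneg fun _ _ => nsq_nonneg _

theorem ASq_nonneg (x : R3) : 0 ≤ ASq φ x :=
  Finset.sum_nonneg fun _ _ => Finset.sum_nonneg fun _ _ => wedgeSq_nonneg _ _

theorem sq_pderiv_le_energyDensity (i : Fin 3) (a : Fin 4) (x : R3) :
    φ.pderiv i x a ^ 2 ≤ energyDensity φ x :=
  calc φ.pderiv i x a ^ 2 ≤ nsq (φ.pderiv i x) := sq_apply_le_nsq _ a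
    _ ≤ gradSq φ x := Finset.single_le_sum (f := fun i => nsq (φ.pderiv i x))
        (fun _ _ => nsq_nonneg _) (Finset.mem_univ i)
    _ ≤ energyDensity φ x := le_add_of_nonneg_right (φ.ASq_nonneg x)

theorem sq_minor_le_energyDensity (i j : Fin 3) (a b : Fin 4) (x : R3) :
    (φ.pderiv i x a * φ.pderiv j x b - φ.pderiv j x a * φ.pderiv i x b) ^ 2 ≤
      2 * energyDensity φ x := by
  have hle : wedgeSq (φ.pderiv i x) (φ.pderiv j x) ≤ energyDensity φ x :=
    calc wedgeSq (φ.pderiv i x) (φ.pderiv j x)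
        ≤ ∑ j, wedgeSq (φ.pderiv i x) (φ.pderiv j x) :=
          Finset.single_le_sum (f := fun j => wedgeSq (φ.pderiv i x) (φ.pderiv j x))
            (fun _ _ => wedgeSq_nonneg _ _) (Finset.mem_univ j)
      _ ≤ ASq φ x := Finset.single_le_sum (f := fun i => ∑ j, wedgeSq (φ.pderiv i x) (φ.pderiv j x))
          (fun _ _ => Finset.sum_nonneg fun _ _ => wedgeSq_nonneg _ _) (Finset.mem_univ i)
      _ ≤ energyDensity φ x := le_add_of_nonneg_left (φ.gradSq_nonneg x)
  rw [mul_comm (φ.pderiv j x a)]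
  exact (sq_minor_le_two_mul_wedgeSq _ _ a b).trans (by gcongr)

variable {φ}

theorem memLp_two_componentGrad (hφ : memX φ) (a : Fin 4) : MemLp (φ.componentGrad a) 2 :=
  memLp_pi_iff.2 fun i => memLp_two_of_sq_le (φ.aestronglyMeasurable_pderiv i a) hφ
    (φ.sq_pderiv_le_energyDensity i a)

theorem memLp_two_cross_componentGrad (hφ : memX φ) (a b : Fin 4) :
    MemLp (fun x => φ.componentGrad a x ⨯₃ φ.componentGrad b x) 2 := by
  have hminor (i j : Fin 3) : MemLp (fun x => φ.componentGrad a x i * φ.componentGrad b x j -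
      φ.componentGrad a x j * φ.componentGrad b x i) 2 :=
    have hmeas (i j : Fin 3) :=
      (φ.aestronglyMeasurable_pderiv i a).mul (φ.aestronglyMeasurable_pderiv j b)
    memLp_two_of_sq_le ((hmeas i j).sub (hmeas j i)) (hφ.const_mul 2)
      (φ.sq_minor_le_energyDensity i j a b)
  simp only [cross_apply]
  rw [memLp_pi_iff]
  intro i
  fin_cases i <;> exact hminor _ _

theorem integrable_triple_product_componentGrad (hφ : memX φ) (a b c : Fin 4) :
    Integrable fun x => φ.componentGrad a x ⬝ᵥ φ.componentGrad b x ⨯₃ φ.componentGrad c x :=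
  integrable_dotProduct_of_memLp_two (memLp_two_componentGrad hφ a)
    (memLp_two_cross_componentGrad hφ b c)

theorem integrable_det4_pderiv (hφ : memX φ) {p : R3 → R4} (hp : MemLp p ⊤) :
    Integrable fun x => det4 (p x) (φ.pderiv 0 x) (φ.pderiv 1 x) (φ.pderiv 2 x) := by
  simp only [det4_pderiv_eq_sum]
  exact integrable_finsetSum _ fun k _ => .const_mul
    ((integrable_triple_product_componentGrad hφ _ _ _).mul_of_top_right (hp.eval k)) _

theorem integral_triple_product_componentGrad (hφ : memX φ) (a b c : Fin 4) :
    ∫ x, φ.componentGrad a x ⬝ᵥ φ.componentGrad b x ⨯₃ φ.componentGrad c x = 0 :=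
  have hφc (a : Fin 4) : MemLp (fun x => φ.toFun x a) ⊤ := φ.memLp_top_toFun.eval a
  integral_triple_product_eq_zero (hφc a) (hφc b) ((hφc c).locallyIntegrable le_top)
    (memLp_two_componentGrad hφ a) (memLp_two_componentGrad hφ b) (memLp_two_componentGrad hφ c)
    (φ.hasWeakGrad_componentGrad a) (φ.hasWeakGrad_componentGrad b)
    (φ.hasWeakGrad_componentGrad c) (memLp_two_cross_componentGrad hφ b c)

theorem integral_det4_pderiv (hφ : memX φ) (p : R4) :
    ∫ x, det4 p (φ.pderiv 0 x) (φ.pderiv 1 x) (φ.pderiv 2 x) = 0 := by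
  simp only [det4_pderiv_eq_sum]
  rw [integral_finsetSum]
  · simp only [integral_const_mul, integral_triple_product_componentGrad hφ, mul_zero,
      Finset.sum_const_zero]
  · exact fun k _ =>
      ((integrable_triple_product_componentGrad hφ _ _ _).const_mul _).const_mul _

end SkyrmeMap

end Skyrme

theorem skyrme_north_pole_det_general (φ : SkyrmeMap) (hφ : memX φ) (p : R4) :
    (∫ x, det4 p (φ.pderiv 0 x) (φ.pderiv 1 x) (φ.pderiv 2 x)) = 0 ∧
    (∫ x, det4 (φ.toFun x - p) (φ.pderiv 0 x) (φ.pderiv 1 x) (φ.pderiv 2 x))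
      = ∫ x, detDen φ x ∧
    (∫ x, detDen φ x) = 2 * π ^ 2 * degree φ := by
  have hzero := SkyrmeMap.integral_det4_pderiv hφ p
  refine ⟨hzero, ?_, ?_⟩
  · simp only [det4_sub_left]
    rw [integral_sub (SkyrmeMap.integrable_det4_pderiv hφ φ.memLp_top_toFun)
      (SkyrmeMap.integrable_det4_pderiv hφ (memLp_top_const p)), hzero, sub_zero]
    rfl
  · rw [degree]
    field_simp

/-- ∫ det(P,∇φ) = 0 and consequently
∫ det(φ−P,∇φ) = ∫ det(φ,∇φ) = 2π² d(φ). -/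
theorem skyrme_north_pole_det (φ : SkyrmeMap) (hφ : memX φ) :
    (∫ x, det4 northPole (φ.pderiv 0 x) (φ.pderiv 1 x) (φ.pderiv 2 x)) = 0 ∧
    (∫ x, det4 (φ.toFun x - northPole) (φ.pderiv 0 x) (φ.pderiv 1 x) (φ.pderiv 2 x))
      = ∫ x, detDen φ x ∧
    (∫ x, detDen φ x) = 2 * π ^ 2 * degree φ :=
  skyrme_north_pole_det_general φ hφ northPole
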